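/- For every n ≥ 5, the optimal rubbling number of the n-prism satisfies ρ_opt(C_n□P_2) ≥ ρ_opt(P_{n−2}□P_2). -/

import Mathlib

open SimpleGraph

/-- A single rubbling move on `G`: either a pebbling move (remove two pebbles at `v`,
add one at an adjacent vertex `u`) or a strict rubbling move (remove one pebble each at
distinct `v` and `w`, both adjacent to `u`, and add one pebble at `u`). -/
def RubblingStep {V : Type*} [DecidableEq V] (G : SimpleGraph V) (p q : V → ℕ) : Prop :=
  (∃ v u, G.Adj v u ∧ 2 ≤ p v ∧
      q = fun x => if x = v then p x - 2 else if x = u then p x + 1 else p x) ∨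
  (∃ v w u, v ≠ w ∧ G.Adj v u ∧ G.Adj w u ∧ 1 ≤ p v ∧ 1 ≤ p w ∧
      q = fun x => if x = v then p x - 1 else if x = w then p x - 1
          else if x = u then p x + 1 else p x)

/-- `q` is obtainable from `p` by an executable rubbling sequence. -/
def RubblingReach {V : Type*} [DecidableEq V] (G : SimpleGraph V) : (V → ℕ) → (V → ℕ) → Prop :=
  Relation.ReflTransGen (RubblingStep G)

/-- The vertex `u` is `k`-reachable from the distribution `p`. -/
def KReachable {V : Type*} [DecidableEq V] (G : SimpleGraph V) (p : V → ℕ) (u : V) (k : ℕ) : Prop :=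
  ∃ q, RubblingReach G p q ∧ k ≤ q u

/-- `p` is solvable: every vertex is reachable. -/
def Solvable {V : Type*} [DecidableEq V] (G : SimpleGraph V) (p : V → ℕ) : Prop :=
  ∀ u, KReachable G p u 1

/-- The optimal rubbling number: the minimum size of a solvable distribution. -/
noncomputable def optRub {V : Type*} [DecidableEq V] [Fintype V] (G : SimpleGraph V) : ℕ :=
  sInf {m | ∃ p : V → ℕ, Solvable G p ∧ ∑ v, p v = m}

/-- The ladder `P_n □ P_2`. -/
def ladder (n : ℕ) : SimpleGraph (Fin n × Fin 2) :=
  pathGraph n □ pathGraph 2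

/-- The `n`-prism `C_n □ P_2`. -/
def prism (n : ℕ) : SimpleGraph (Fin n × Fin 2) :=
  cycleGraph n □ pathGraph 2

/-!
Turn the prism into a ladder by gluing column `0` to column `n - 1` and column `1` to column `2`,
and by cutting the edges between columns `0` and `1`. A solvable distribution `p` on the prism is
pushed forward along this gluing, and a rubbling sequence on the prism can be imitated on the ladder
as long as it does not use the cut edges. Weigh a pebble by the sum of `2 ^ (-d)` over its two
distances `d` around the prism to column `0`; no move increases the total weight. If `p` has fewer
than `2 n / 3` pebbles, averaging over the rotations makes the total weight less than `2`, so that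
essentially one pebble can arrive in column `0`. One pebble of the ladder can stand in for it, and
once it is spent the remaining weight is too small for another pebble of column `0` to be of use.
If `p` has at least `2 n / 3` pebbles, a diagonal pattern with two pebbles in every three columns of
the ladder is no larger than `p`.
-/

open scoped Matrix

section Moves

variable {V : Type*} [DecidableEq V] {G : SimpleGraph V} {p q r f g : V → ℕ} {u v w : V}

/-- The distribution consisting of a single pebble on `v`. -/
abbrev pebble (v : V) : V → ℕ :=
  Pi.single v 1

lemma pebble_apply (v x : V) : pebble v x = if x = v then 1 else 0 :=
  Pi.single_apply v 1 x

lemma pebble_apply_of_ne {x : V} (h : x ≠ v) : pebble v x = 0 :=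
  Pi.single_eq_of_ne h 1

lemma exists_eq_add_pebble (h : 1 ≤ p v) : ∃ r, p = r + pebble v := by
  have hle : pebble v ≤ p := fun x => by
    rw [pebble_apply]
    split_ifs with hx
    · rwa [hx]
    · exact Nat.zero_le _
  obtain ⟨r, rfl⟩ := exists_add_of_le hle
  exact ⟨r, add_comm _ _⟩

lemma exists_eq_add_pebble_add_pebble (hvw : v ≠ w) (hv : 1 ≤ p v) (hw : 1 ≤ p w) :
    ∃ r, p = r + pebble v + pebble w := by
  obtain ⟨s, rfl⟩ := exists_eq_add_pebble hw
  rw [Pi.add_apply, pebble_apply_of_ne hvw] at hv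
  obtain ⟨r, rfl⟩ := exists_eq_add_pebble (p := s) hv
  exact ⟨r, rfl⟩

lemma RubblingStep.exists_eq_add (h : RubblingStep G p q) :
    ∃ r v w u, G.Adj v u ∧ G.Adj w u ∧ p = r + pebble v + pebble w ∧ q = r + pebble u := by
  rcases h with ⟨v, u, hvu, hp, rfl⟩ | ⟨v, w, u, hvw, hv, hw, hpv, hpw, rfl⟩
  · obtain ⟨s, rfl⟩ := exists_eq_add_pebble (Nat.one_le_of_lt hp)
    obtain ⟨r, rfl⟩ := exists_eq_add_pebble (p := s) (v := v) (by simpa using hp)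
    refine ⟨r, v, v, u, hvu, hvu, rfl, funext fun x => ?_⟩
    have := hvu.ne
    simp only [Pi.add_apply, pebble_apply]
    split_ifs <;> simp_all
  · obtain ⟨r, rfl⟩ := exists_eq_add_pebble_add_pebble hvw hpv hpw
    refine ⟨r, v, w, u, hv, hw, rfl, funext fun x => ?_⟩
    have := hv.ne
    have := hw.ne
    simp only [Pi.add_apply, pebble_apply]
    split_ifs <;> simp_all

lemma rubblingStep_add_pebble (r : V → ℕ) (hv : G.Adj v u) (hw : G.Adj w u) :
    RubblingStep G (r + pebble v + pebble w) (r + pebble u) := by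
  have hvu := hv.ne
  have hwu := hw.ne
  by_cases hvw : v = w
  · subst hvw
    refine Or.inl ⟨v, u, hv, by simp, funext fun x => ?_⟩
    simp only [Pi.add_apply, pebble_apply]
    split_ifs <;> simp_all
  · refine Or.inr ⟨v, w, u, hvw, hv, hw, le_add_right (by simp), by simp, funext fun x => ?_⟩
    simp only [Pi.add_apply, pebble_apply]
    split_ifs <;> simp_all

lemma add_pebble_eq_add_pebble_add_pebble {a : V}
    (h : r + pebble a = p + pebble v + pebble w) :
    (v = a ∧ r = p + pebble w) ∨ (w = a ∧ r = p + pebble v) ∨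
      ∃ s, p = s + pebble a ∧ r = s + pebble v + pebble w := by
  by_cases hw : w = a
  · subst hw
    exact Or.inr (Or.inl ⟨rfl, add_right_cancel h⟩)
  by_cases hv : v = a
  · subst hv
    rw [add_right_comm] at h
    exact Or.inl ⟨rfl, add_right_cancel h⟩
  have hpa := congrFun h a
  simp only [Pi.add_apply, pebble_apply_of_ne (Ne.symm hv), pebble_apply_of_ne (Ne.symm hw),
    Pi.single_eq_same] at hpa
  obtain ⟨s, rfl⟩ := exists_eq_add_pebble (p := p) (v := a) (by omega)
  rw [add_right_comm s, add_right_comm _ (pebble a)] at h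
  exact Or.inr (Or.inr ⟨s, rfl, add_right_cancel h⟩)

lemma RubblingStep.dotProduct_le [Fintype V] {weight : V → ℕ}
    (hweight : ∀ v u, G.Adj v u → weight u ≤ 2 * weight v) (h : RubblingStep G p q) :
    weight ⬝ᵥ q ≤ weight ⬝ᵥ p := by
  obtain ⟨r, v, w, u, hv, hw, rfl, rfl⟩ := h.exists_eq_add
  simp only [dotProduct_add, dotProduct_single_one]
  have := hweight v u hv
  have := hweight w u hw
  omega

/-- `RubblingCovers G p f`: some distribution reachable from `p` dominates `f` pointwise. -/
def RubblingCovers (G : SimpleGraph V) (p f : V → ℕ) : Prop :=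
  ∃ q, RubblingReach G p q ∧ f ≤ q

lemma RubblingCovers.refl (G : SimpleGraph V) (p : V → ℕ) : RubblingCovers G p p :=
  ⟨p, .refl, le_rfl⟩

lemma RubblingCovers.mono (h : RubblingCovers G p f) (hg : g ≤ f) : RubblingCovers G p g := by
  obtain ⟨q, hq, hf⟩ := h
  exact ⟨q, hq, hg.trans hf⟩

lemma RubblingCovers.move (h : RubblingCovers G p (r + pebble v + pebble w))
    (hv : G.Adj v u) (hw : G.Adj w u) : RubblingCovers G p (r + pebble u) := by
  obtain ⟨q, hq, hf⟩ := h
  obtain ⟨s, rfl⟩ := exists_add_of_le hf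
  refine ⟨r + s + pebble u, hq.tail ?_, add_le_add_left le_self_add _⟩
  convert rubblingStep_add_pebble (r + s) hv hw using 1
  abel

lemma RubblingCovers.kReachable {k : ℕ} (h : RubblingCovers G p f) (hu : k ≤ f u) :
    KReachable G p u k := by
  obtain ⟨q, hq, hf⟩ := h
  exact ⟨q, hq, hu.trans (hf u)⟩

lemma KReachable.of_le {k : ℕ} (hu : k ≤ p u) : KReachable G p u k :=
  (RubblingCovers.refl G p).kReachable hu

lemma KReachable.of_adj_of_adj (hvw : v ≠ w) (hpv : 1 ≤ p v) (hpw : 1 ≤ p w)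
    (hv : G.Adj v u) (hw : G.Adj w u) : KReachable G p u 1 := by
  obtain ⟨r, rfl⟩ := exists_eq_add_pebble_add_pebble hvw hpv hpw
  exact ((RubblingCovers.refl G _).move hv hw).kReachable (by simp)

lemma KReachable.of_adj_of_two_adj {a b c : V} (hab : a ≠ b) (hac : a ≠ c) (hbc : b ≠ c)
    (hpa : 1 ≤ p a) (hpb : 1 ≤ p b) (hpc : 1 ≤ p c) (ha : G.Adj a v) (hb : G.Adj b v)
    (hv : G.Adj v u) (hc : G.Adj c u) : KReachable G p u 1 := by
  obtain ⟨s, rfl⟩ := exists_eq_add_pebble hpc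
  rw [Pi.add_apply, pebble_apply_of_ne hac] at hpa
  rw [Pi.add_apply, pebble_apply_of_ne hbc] at hpb
  obtain ⟨r, rfl⟩ := exists_eq_add_pebble_add_pebble hab hpa hpb
  have hstart : RubblingCovers G (r + pebble a + pebble b + pebble c)
      (r + pebble c + pebble a + pebble b) :=
    (RubblingCovers.refl G _).mono (le_of_eq (by abel))
  have hmid := hstart.move ha hb
  exact (hmid.move hc hv).kReachable (by simp)

end Moves

section OptimalNumber

variable {V : Type*} [DecidableEq V] [Fintype V] {G : SimpleGraph V}

lemma optRub_le_sum {p : V → ℕ} (h : Solvable G p) : optRub G ≤ ∑ v, p v :=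
  Nat.sInf_le ⟨p, h, rfl⟩

lemma exists_solvable_sum_eq_optRub (G : SimpleGraph V) :
    ∃ p : V → ℕ, Solvable G p ∧ ∑ v, p v = optRub G :=
  Nat.sInf_mem (s := {m | ∃ p : V → ℕ, Solvable G p ∧ ∑ v, p v = m})
    ⟨_, fun _ => 1, fun _ => .of_le le_rfl, rfl⟩

end OptimalNumber

section Isomorphism

variable {V V' : Type*} [DecidableEq V] [DecidableEq V'] {G : SimpleGraph V}
  {G' : SimpleGraph V'} {p q : V' → ℕ}

lemma pebble_comp_equiv (φ : V ≃ V') (v : V') : pebble v ∘ φ = pebble (φ.symm v) := by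
  funext x
  simp [pebble_apply, Equiv.eq_symm_apply]

lemma RubblingStep.comp_iso (φ : G ≃g G') (h : RubblingStep G' p q) :
    RubblingStep G (p ∘ φ) (q ∘ φ) := by
  obtain ⟨r, v, w, u, hv, hw, rfl, rfl⟩ := h.exists_eq_add
  have hpebble (x : V') : pebble x ∘ φ = pebble (φ.symm x) := pebble_comp_equiv φ.toEquiv x
  simp only [Pi.add_comp, hpebble]
  exact rubblingStep_add_pebble _ (φ.symm.map_adj_iff.2 hv) (φ.symm.map_adj_iff.2 hw)

lemma Solvable.comp_iso (φ : G ≃g G') (h : Solvable G' p) : Solvable G (p ∘ φ) := fun u => by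
  obtain ⟨q, hq, hu⟩ := h (φ u)
  exact ⟨q ∘ φ, hq.lift (· ∘ φ) fun _ _ hs => hs.comp_iso φ, hu⟩

end Isomorphism

section Pushforward

variable {V V' : Type*} [Fintype V] [DecidableEq V']

/-- The image of a distribution under `π`: all pebbles on the fibre over `y` are placed on `y`. -/
def pushforward (π : V → V') : (V → ℕ) →+ (V' → ℕ) where
  toFun q y := ∑ v with π v = y, q v
  map_zero' := by
    funext y
    simp
  map_add' q r := by
    funext y
    simp [Finset.sum_add_distrib]

lemma pushforward_apply (π : V → V') (q : V → ℕ) (y : V') :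
    pushforward π q y = ∑ v with π v = y, q v :=
  rfl

lemma pushforward_pebble [DecidableEq V] (π : V → V') (v : V) :
    pushforward π (pebble v) = pebble (π v) := by
  funext y
  simp [pushforward_apply, pebble_apply, eq_comm]

lemma pushforward_mono (π : V → V') : Monotone (pushforward π) := fun _ _ h _ =>
  Finset.sum_le_sum fun v _ => h v

lemma le_pushforward_apply (π : V → V') (q : V → ℕ) (v : V) : q v ≤ pushforward π q (π v) :=
  Finset.single_le_sum (f := q) (fun _ _ => Nat.zero_le _) (by simp)

lemma sum_pushforward [Fintype V'] (π : V → V') (q : V → ℕ) :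
    ∑ y, pushforward π q y = ∑ v, q v :=
  Finset.sum_fiberwise _ π q

/-- `PushCovers G' π p f`: the image of `p` in `G'` can be rubbled to cover the image of `f`. -/
def PushCovers (G' : SimpleGraph V') (π : V → V') (p f : V → ℕ) : Prop :=
  RubblingCovers G' (pushforward π p) (pushforward π f)

variable {G' : SimpleGraph V'} {π : V → V'} {p f g r : V → ℕ} {u v w : V}

lemma PushCovers.mono (h : PushCovers G' π p f) (hg : g ≤ f) : PushCovers G' π p g :=
  RubblingCovers.mono h (pushforward_mono π hg)

lemma PushCovers.kReachable {k : ℕ} (h : PushCovers G' π p f) (hu : k ≤ f u) :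
    KReachable G' (pushforward π p) (π u) k :=
  RubblingCovers.kReachable h (hu.trans (le_pushforward_apply π f u))

variable [DecidableEq V]

lemma PushCovers.congr_pebble (h : PushCovers G' π p (r + pebble v)) (hvu : π v = π u) :
    PushCovers G' π p (r + pebble u) := by
  unfold PushCovers at h ⊢
  rwa [map_add, pushforward_pebble, ← hvu, ← pushforward_pebble, ← map_add]

lemma PushCovers.move (h : PushCovers G' π p (r + pebble v + pebble w))
    (hv : π v = π u ∨ G'.Adj (π v) (π u)) (hw : π w = π u ∨ G'.Adj (π w) (π u)) :
    PushCovers G' π p (r + pebble u) := by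
  rcases hv with hv | hv
  · exact (h.mono le_self_add).congr_pebble hv
  rcases hw with hw | hw
  · exact (h.mono (add_le_add_left le_self_add _)).congr_pebble hw
  unfold PushCovers at h ⊢
  simp only [map_add, pushforward_pebble] at h ⊢
  exact RubblingCovers.move h hv hw

end Pushforward

section Ladder

variable {n : ℕ}

lemma ladder_adj_iff {v u : Fin n × Fin 2} : (ladder n).Adj v u ↔
    (v.2 = u.2 ∧ (v.1.val + 1 = u.1.val ∨ u.1.val + 1 = v.1.val)) ∨
      (v.1 = u.1 ∧ v.2 ≠ u.2) := by
  rw [ladder, boxProd_adj, pathGraph_adj, pathGraph_adj]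
  omega

lemma ladder_eq_or_adj_iff {v u : Fin n × Fin 2} : v = u ∨ (ladder n).Adj v u ↔
    (v.2 = u.2 ∧ v.1.val ≤ u.1.val + 1 ∧ u.1.val ≤ v.1.val + 1) ∨ v.1 = u.1 := by
  rw [ladder_adj_iff, Prod.ext_iff]
  omega

/-- A sparse solvable distribution on the ladder: each block of three columns carries the diagonal
pair in its first two columns, and a pebble is added in the last column when its block is
incomplete at the right end. -/
def zigzag (n : ℕ) (v : Fin n × Fin 2) : ℕ :=
  if v.1.val % 3 = v.2.val ∨ (v.1.val + 1 = n ∧ n % 3 = v.2.val) then 1 else 0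

lemma one_le_zigzag {v : Fin n × Fin 2}
    (h : v.1.val % 3 = v.2.val ∨ (v.1.val + 1 = n ∧ n % 3 = v.2.val)) : 1 ≤ zigzag n v := by
  rw [zigzag, if_pos h]

lemma kReachable_zigzag_top (i : Fin n) : KReachable (ladder n) (zigzag n) (i, 0) 1 := by
  obtain ⟨i, hi⟩ := i
  by_cases hpebbled : i % 3 = 0 ∨ (i + 1 = n ∧ n % 3 = 0)
  · exact .of_le (one_le_zigzag hpebbled)
  by_cases hmod : i % 3 = 1
  · refine .of_adj_of_adj (v := (⟨i, hi⟩, 1)) (w := (⟨i - 1, by omega⟩, 0)) (by simp)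
      (one_le_zigzag ?_) (one_le_zigzag ?_) (ladder_adj_iff.2 ?_) (ladder_adj_iff.2 ?_) <;> grind
  · refine .of_adj_of_two_adj (v := (⟨i - 1, by omega⟩, 0)) (a := (⟨i - 2, by omega⟩, 0))
      (b := (⟨i - 1, by omega⟩, 1)) (c := (⟨i + 1, by omega⟩, 0)) ?_ ?_ ?_
      (one_le_zigzag ?_) (one_le_zigzag ?_) (one_le_zigzag ?_)
      (ladder_adj_iff.2 ?_) (ladder_adj_iff.2 ?_) (ladder_adj_iff.2 ?_) (ladder_adj_iff.2 ?_) <;>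
      grind

lemma kReachable_zigzag_bottom (i : Fin n) : KReachable (ladder n) (zigzag n) (i, 1) 1 := by
  obtain ⟨i, hi⟩ := i
  by_cases hpebbled : i % 3 = 1 ∨ (i + 1 = n ∧ n % 3 = 1)
  · exact .of_le (one_le_zigzag hpebbled)
  by_cases hmod : i % 3 = 0
  · refine .of_adj_of_adj (v := (⟨i, hi⟩, 0)) (w := (⟨i + 1, by omega⟩, 1)) (by simp)
      (one_le_zigzag ?_) (one_le_zigzag ?_) (ladder_adj_iff.2 ?_) (ladder_adj_iff.2 ?_) <;> grind
  by_cases hlast : i + 1 = n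
  · refine .of_adj_of_adj (v := (⟨i, hi⟩, 0)) (w := (⟨i - 1, by omega⟩, 1)) (by simp)
      (one_le_zigzag ?_) (one_le_zigzag ?_) (ladder_adj_iff.2 ?_) (ladder_adj_iff.2 ?_) <;> grind
  by_cases hpenultimate : i + 2 = n
  · refine .of_adj_of_adj (v := (⟨i + 1, by omega⟩, 1)) (w := (⟨i - 1, by omega⟩, 1)) ?_
      (one_le_zigzag ?_) (one_le_zigzag ?_) (ladder_adj_iff.2 ?_) (ladder_adj_iff.2 ?_) <;> grind
  · refine .of_adj_of_two_adj (v := (⟨i + 1, by omega⟩, 1)) (a := (⟨i + 1, by omega⟩, 0))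
      (b := (⟨i + 2, by omega⟩, 1)) (c := (⟨i - 1, by omega⟩, 1)) ?_ ?_ ?_
      (one_le_zigzag ?_) (one_le_zigzag ?_) (one_le_zigzag ?_)
      (ladder_adj_iff.2 ?_) (ladder_adj_iff.2 ?_) (ladder_adj_iff.2 ?_) (ladder_adj_iff.2 ?_) <;>
      grind

lemma solvable_zigzag (n : ℕ) : Solvable (ladder n) (zigzag n)
  | (i, 0) => kReachable_zigzag_top i
  | (i, 1) => kReachable_zigzag_bottom i

lemma sum_range_mod_three_ne_two (k : ℕ) :
    ∑ i ∈ Finset.range k, (if i % 3 = 2 then 0 else 1) = 2 * (k / 3) + k % 3 := by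
  induction k with
  | zero => simp
  | succ k ih =>
    rw [Finset.sum_range_succ, ih]
    split_ifs <;> omega

lemma three_mul_sum_zigzag_le (n : ℕ) : 3 * ∑ v, zigzag (n + 1) v ≤ 2 * (n + 1) + 4 := by
  have hcolumn (i : Fin (n + 1)) : zigzag (n + 1) (i, 0) + zigzag (n + 1) (i, 1) =
      (if i.val % 3 = 2 then 0 else 1) +
        if i.val = n then (if (n + 1) % 3 = 2 then 0 else 1) else 0 := by
    simp only [zigzag, Fin.val_zero, Fin.val_one]
    split_ifs <;> omega
  have hsum : ∑ v, zigzag (n + 1) v = (2 * ((n + 1) / 3) + (n + 1) % 3) +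
      if (n + 1) % 3 = 2 then 0 else 1 := by
    simp only [Fintype.sum_prod_type, Fin.sum_univ_two, hcolumn]
    rw [Fin.sum_univ_eq_sum_range (fun i => (if i % 3 = 2 then 0 else 1) +
      if i = n then (if (n + 1) % 3 = 2 then 0 else 1) else 0), Finset.sum_add_distrib,
      sum_range_mod_three_ne_two, Finset.sum_ite_eq', if_pos (by simp)]
  rw [hsum]
  split_ifs <;> omega

lemma three_mul_optRub_ladder_le (n : ℕ) : 3 * optRub (ladder (n + 1)) ≤ 2 * (n + 1) + 4 :=
  (Nat.mul_le_mul_left 3 (optRub_le_sum (solvable_zigzag _))).trans (three_mul_sum_zigzag_le n)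

end Ladder

section PrismSymmetry

variable {n : ℕ}

lemma columns_of_prism_adj {v u : Fin n × Fin 2} (h : (prism n).Adj v u) :
    (v.2 = u.2 ∧ (v.1.val + 1 = u.1.val ∨ u.1.val + 1 = v.1.val ∨
      (v.1.val = 0 ∧ u.1.val + 1 = n) ∨ (u.1.val = 0 ∧ v.1.val + 1 = n))) ∨
    (v.1 = u.1 ∧ v.2 ≠ u.2) := by
  rw [prism, boxProd_adj, cycleGraph_adj', pathGraph_adj] at h
  have hsub (a b : Fin n) : (a - b).val = if b.val ≤ a.val then a.val - b.val
      else n + a.val - b.val := by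
    split_ifs with hle
    · exact Fin.coe_sub_iff_le.2 hle
    · exact Fin.coe_sub_iff_lt.2 (not_le.1 hle)
  rw [hsub, hsub] at h
  split_ifs at h <;> omega

variable [NeZero n]

/-- The automorphism of the prism adding `c` to every column index. -/
def prismRotation (c : Fin n) : prism n ≃g prism n where
  toEquiv := (Equiv.addRight c).prodCongr (.refl _)
  map_rel_iff' := by simp [prism, boxProd_adj, cycleGraph_adj']

/-- The automorphism of the prism negating every column index. -/
def prismReflection (n : ℕ) [NeZero n] : prism n ≃g prism n where
  toEquiv := (Equiv.neg (Fin n)).prodCongr (.refl _)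
  map_rel_iff' {v u} := by
    have hneg (a b : Fin n) : -a - -b = b - a := by abel
    simp [prism, boxProd_adj, cycleGraph_adj', hneg, or_comm]

lemma prismReflection_prismReflection (v : Fin n × Fin 2) :
    prismReflection n (prismReflection n v) = v := by
  ext <;> simp [prismReflection]

lemma val_fst_prismReflection (v : Fin n × Fin 2) :
    (prismReflection n v).1.val = if v.1.val = 0 then 0 else n - v.1.val := by
  simp only [Fin.val_eq_zero_iff]
  exact Fin.val_neg v.1

lemma dotProduct_comp_prismReflection (weight p : Fin n × Fin 2 → ℕ) :
    weight ⬝ᵥ (p ∘ prismReflection n) = (weight ∘ prismReflection n) ⬝ᵥ p := by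
  refine (Equiv.sum_comp (prismReflection n).toEquiv _).symm.trans ?_
  simp [dotProduct, prismReflection_prismReflection]

lemma sum_dotProduct_comp_prismRotation (weight : Fin n → ℕ) (p : Fin n × Fin 2 → ℕ) :
    ∑ c, (fun v => weight v.1) ⬝ᵥ (p ∘ prismRotation c) = (∑ i, weight i) * ∑ v, p v := by
  have hcolumn (i : Fin n) : ∑ c, ∑ j, p (i + c, j) = ∑ v, p v := by
    rw [Fintype.sum_prod_type]
    exact Equiv.sum_comp (Equiv.addLeft i) fun c => ∑ j, p (c, j)
  calc ∑ c, (fun v => weight v.1) ⬝ᵥ (p ∘ prismRotation c)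
      = ∑ i, ∑ c, ∑ j, weight i * p (i + c, j) := by
        simp only [dotProduct, Fintype.sum_prod_type]
        exact Finset.sum_comm
    _ = (∑ i, weight i) * ∑ v, p v := by
        simp only [← Finset.mul_sum, hcolumn, ← Finset.sum_mul]

end PrismSymmetry

section Weights

variable {n : ℕ} {v w u : Fin n × Fin 2}

/-- The weight `2 ^ (-d)`, scaled by `2 ^ n`, where `d` is the distance from `v` to column `0` along
the columns of decreasing index. -/
def oneSidedWeight (n : ℕ) (v : Fin n × Fin 2) : ℕ :=
  2 ^ (n - v.1.val)

/-- The sum of the weights `2 ^ (-d)`, scaled by `2 ^ n`, over the distances `d` from `v` to column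
`0` in the two directions around the prism. -/
def twoSidedWeight (n : ℕ) (v : Fin n × Fin 2) : ℕ :=
  2 ^ (n - v.1.val) + 2 ^ v.1.val

lemma two_pow_mul_twoSidedWeight {d : ℕ} (hd : v.1.val = d ∨ v.1.val + d = n) :
    2 ^ d * twoSidedWeight n v = 2 ^ n + 4 ^ d := by
  have := v.1.isLt
  rw [twoSidedWeight, show 4 ^ d = 2 ^ d * 2 ^ d from mul_pow 2 2 d, mul_add, ← pow_add, ← pow_add,
    ← pow_add]
  rcases hd with hd | hd
  · rw [hd, Nat.add_sub_cancel' (by omega)]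
  · rw [show n - v.1.val = d by omega, show d + v.1.val = n by omega, add_comm]

lemma twoSidedWeight_of_column_zero (hv : v.1.val = 0) : twoSidedWeight n v = 2 ^ n + 1 := by
  simpa using two_pow_mul_twoSidedWeight (Or.inl hv)

lemma two_mul_twoSidedWeight (hv : v.1.val = 1 ∨ v.1.val + 1 = n) :
    2 * twoSidedWeight n v = 2 ^ n + 4 := by
  simpa using two_pow_mul_twoSidedWeight hv

lemma two_pow_add_le_four_mul_twoSidedWeight (hn : 3 ≤ n) (hv : v.1.val ≤ 2 ∨ n ≤ v.1.val + 2) :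
    2 ^ n + 16 ≤ 4 * twoSidedWeight n v := by
  have hpow : 2 ^ 3 ≤ 2 ^ n := Nat.pow_le_pow_right two_pos hn
  have hd : v.1.val = 0 ∨ (v.1.val = 1 ∨ v.1.val + 1 = n) ∨ (v.1.val = 2 ∨ v.1.val + 2 = n) := by
    omega
  rcases hd with hd | hd | hd
  · have := twoSidedWeight_of_column_zero hd
    omega
  · have := two_mul_twoSidedWeight hd
    omega
  · exact (two_pow_mul_twoSidedWeight hd).ge

lemma column_ne_zero_of_twoSidedWeight_lt (h : twoSidedWeight n v < 2 ^ n) : v.1.val ≠ 0 :=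
  fun hv => by
    have := twoSidedWeight_of_column_zero hv
    omega

lemma column_ne_zero_of_oneSidedWeight_lt (h : oneSidedWeight n v < 2 ^ n) : v.1.val ≠ 0 :=
  fun hv => by
    rw [oneSidedWeight, hv, Nat.sub_zero] at h
    exact h.false

lemma two_mul_oneSidedWeight (hv : v.1.val = 1) : 2 * oneSidedWeight n v = 2 ^ n := by
  rw [oneSidedWeight, hv, ← pow_succ', Nat.sub_add_cancel (by omega)]

lemma oneSidedWeight_le_two_mul (h : v.1.val ≤ u.1.val + 1) :
    oneSidedWeight n u ≤ 2 * oneSidedWeight n v := by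
  rw [oneSidedWeight, oneSidedWeight, ← pow_succ']
  exact Nat.pow_le_pow_right two_pos (by omega)

lemma twoSidedWeight_le_two_mul (h : (prism n).Adj v u) :
    twoSidedWeight n u ≤ 2 * twoSidedWeight n v := by
  have hwrap {a b : Fin n × Fin 2} (ha : a.1.val = 0) (hb : b.1.val + 1 = n) :
      twoSidedWeight n a ≤ 2 * twoSidedWeight n b ∧
        twoSidedWeight n b ≤ 2 * twoSidedWeight n a := by
    have := twoSidedWeight_of_column_zero ha
    have := two_mul_twoSidedWeight (Or.inr hb)
    omega
  have hpath {a b : Fin n × Fin 2} (hab : a.1.val ≤ b.1.val + 1) (hba : b.1.val ≤ a.1.val + 1) :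
      twoSidedWeight n b ≤ 2 * twoSidedWeight n a := by
    have hdown : 2 ^ (n - b.1.val) ≤ 2 * 2 ^ (n - a.1.val) := oneSidedWeight_le_two_mul hab
    have hup : 2 ^ b.1.val ≤ 2 ^ (a.1.val + 1) := Nat.pow_le_pow_right two_pos hba
    rw [pow_succ'] at hup
    rw [twoSidedWeight, twoSidedWeight]
    omega
  rcases columns_of_prism_adj h with ⟨-, h | h | ⟨hv, hu⟩ | ⟨hu, hv⟩⟩ | ⟨h, -⟩
  · exact hpath (by omega) (by omega)
  · exact hpath (by omega) (by omega)
  · exact (hwrap hv hu).2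
  · exact (hwrap hu hv).1
  · exact hpath (by omega) (by omega)

lemma twoSidedWeight_le_add (hv : (prism n).Adj v u) (hw : (prism n).Adj w u) :
    twoSidedWeight n u ≤ twoSidedWeight n v + twoSidedWeight n w := by
  have := twoSidedWeight_le_two_mul hv
  have := twoSidedWeight_le_two_mul hw
  omega

lemma sum_twoSidedWeight_le (n : ℕ) : ∑ i : Fin n, (2 ^ (n - i.val) + 2 ^ i.val) ≤ 3 * 2 ^ n := by
  have hdown (k : ℕ) : ∑ i ∈ Finset.range k, 2 ^ (k - i) + 2 = 2 * 2 ^ k := by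
    induction k with
    | zero => simp
    | succ k ih =>
      rw [Finset.sum_range_succ']
      simp only [Nat.add_sub_add_right, Nat.sub_zero, pow_succ]
      omega
  have hup : ∑ i ∈ Finset.range n, 2 ^ i < 2 ^ n :=
    Nat.geomSum_lt le_rfl fun i hi => Finset.mem_range.1 hi
  rw [Fin.sum_univ_eq_sum_range (fun i => 2 ^ (n - i) + 2 ^ i), Finset.sum_add_distrib]
  have := hdown n
  omega

variable [NeZero n]

lemma twoSidedWeight_comp_prismReflection :
    twoSidedWeight n ∘ prismReflection n = twoSidedWeight n := by
  funext v
  have := v.1.isLt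
  simp only [Function.comp_apply, twoSidedWeight, val_fst_prismReflection]
  split_ifs with hv
  · rw [hv]
  · rw [Nat.sub_sub_self (by omega), add_comm]

lemma oneSidedWeight_add_comp_prismReflection {p : Fin n × Fin 2 → ℕ}
    (hp : ∀ v, v.1.val = 0 → p v = 0) :
    oneSidedWeight n ⬝ᵥ p + oneSidedWeight n ⬝ᵥ (p ∘ prismReflection n) =
      twoSidedWeight n ⬝ᵥ p := by
  rw [dotProduct_comp_prismReflection, ← add_dotProduct]
  refine Finset.sum_congr rfl fun v _ => ?_
  by_cases hv : v.1.val = 0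
  · rw [hp v hv, mul_zero, mul_zero]
  · have := v.1.isLt
    simp only [Pi.add_apply, Function.comp_apply, oneSidedWeight, twoSidedWeight,
      val_fst_prismReflection, if_neg hv]
    rw [Nat.sub_sub_self (by omega)]

lemma exists_twoSidedWeight_comp_prismRotation_lt {p : Fin n × Fin 2 → ℕ}
    (hp : 3 * ∑ v, p v < 2 * n) :
    ∃ c, twoSidedWeight n ⬝ᵥ (p ∘ prismRotation c) < 2 * 2 ^ n := by
  by_contra! h
  have hlower : n * (2 * 2 ^ n) ≤ ∑ c, twoSidedWeight n ⬝ᵥ (p ∘ prismRotation c) := by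
    simpa using Finset.card_nsmul_le_sum Finset.univ _ _ fun c _ => h c
  have hupper : ∑ c, twoSidedWeight n ⬝ᵥ (p ∘ prismRotation c) ≤ 3 * 2 ^ n * ∑ v, p v :=
    (sum_dotProduct_comp_prismRotation _ p).trans_le
      (Nat.mul_le_mul_right _ (sum_twoSidedWeight_le n))
  have hpow : 0 < 2 ^ n := by positivity
  nlinarith

end Weights

section Fold

variable {m : ℕ}

/-- The contraction of the prism onto the ladder with two columns fewer. It glues column `0` to the
last column and column `1` to column `2`, and it does not respect the edges between columns `0`
and `1`. -/
def foldPrism (v : Fin (m + 3) × Fin 2) : Fin (m + 1) × Fin 2 :=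
  (if v.1.val = 0 then Fin.last m else ⟨v.1.val - 2, by omega⟩, v.2)

variable {v u : Fin (m + 3) × Fin 2}

lemma val_fst_foldPrism (hv : v.1.val ≠ 0) : (foldPrism v).1.val = v.1.val - 2 := by
  simp [foldPrism, hv]

lemma foldPrism_eq_or_adj (hv : v.1.val ≠ 0) (hu : u.1.val ≠ 0)
    (h : v.1.val - 2 = u.1.val - 2 ∨ (prism (m + 3)).Adj v u) :
    foldPrism v = foldPrism u ∨ (ladder (m + 1)).Adj (foldPrism v) (foldPrism u) := by
  rw [ladder_eq_or_adj_iff, Fin.ext_iff (a := (foldPrism v).1), val_fst_foldPrism hv,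
    val_fst_foldPrism hu]
  change (v.2 = u.2 ∧ _) ∨ _
  have := h.imp_right columns_of_prism_adj
  omega

lemma foldPrism_eq (hv : v.1.val ≠ 0) (hu : u.1.val ≠ 0) (hcolumn : v.1.val - 2 = u.1.val - 2)
    (hrow : v.2 = u.2) : foldPrism v = foldPrism u := by
  refine Prod.ext (Fin.ext ?_) hrow
  rwa [val_fst_foldPrism hv, val_fst_foldPrism hu]

end Fold

section Simulation

variable {m : ℕ}

/-- `FoldCovers p f`: the image of `p` in the folded ladder can be rubbled to cover the image
of `f`. -/
abbrev FoldCovers (p f : Fin (m + 3) × Fin 2 → ℕ) : Prop :=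
  PushCovers (ladder (m + 1)) foldPrism p f

/-- The invariant of the simulation: `q` arises on the prism from `p`, and the image of `p` in the
ladder can keep up with it.
* `before`: no pebble has entered column `0`, and `q` is covered.
* `waiting`: the only pebble in column `0` is `a`, represented by the pebble `t` in the last column.
* `crossed`: this pebble has moved on to `a` in column `1`; a pebble `b` of that column represents
  it.
* `light`: pebbles in column `0` can take no further part and are discarded. -/
inductive FoldSimulates (p : Fin (m + 3) × Fin 2 → ℕ) : (Fin (m + 3) × Fin 2 → ℕ) → Prop
  | before {q} (hcovers : FoldCovers p q)
      (htwo : twoSidedWeight (m + 3) ⬝ᵥ q < 2 * 2 ^ (m + 3))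
      (hone : oneSidedWeight (m + 3) ⬝ᵥ q < 2 ^ (m + 3)) : FoldSimulates p q
  | waiting {r a t} (ha : a.1.val = 0) (ht : t.1.val + 1 = m + 3)
      (hcovers : FoldCovers p (r + pebble t))
      (htwo : twoSidedWeight (m + 3) ⬝ᵥ r < 2 ^ (m + 3)) : FoldSimulates p (r + pebble a)
  | crossed {r a b} (ha : a.1.val = 1) (hb : b.1.val = 1)
      (hcovers : FoldCovers p (r + pebble b))
      (htwo : 2 * twoSidedWeight (m + 3) ⬝ᵥ r < 2 ^ (m + 3)) : FoldSimulates p (r + pebble a)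
  | light {q} (hcovers : FoldCovers p (Set.indicator {v | v.1.val ≠ 0} q))
      (htwo : 4 * twoSidedWeight (m + 3) ⬝ᵥ q < 5 * 2 ^ (m + 3)) : FoldSimulates p q

variable {p q r : Fin (m + 3) × Fin 2 → ℕ} {v w u a b t : Fin (m + 3) × Fin 2}

lemma FoldCovers.move (h : FoldCovers p (r + pebble v + pebble w))
    (hv : v.1.val ≠ 0) (hw : w.1.val ≠ 0) (hu : u.1.val ≠ 0)
    (hvu : v.1.val - 2 = u.1.val - 2 ∨ (prism (m + 3)).Adj v u)
    (hwu : w.1.val - 2 = u.1.val - 2 ∨ (prism (m + 3)).Adj w u) :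
    FoldCovers p (r + pebble u) :=
  PushCovers.move h (foldPrism_eq_or_adj hv hu hvu) (foldPrism_eq_or_adj hw hu hwu)

lemma FoldSimulates.of_covers (h : FoldCovers p q)
    (hq : 4 * twoSidedWeight (m + 3) ⬝ᵥ q < 5 * 2 ^ (m + 3)) : FoldSimulates p q :=
  .light (h.mono (Set.indicator_le_self _ q)) hq

lemma FoldSimulates.step_before (hv : (prism (m + 3)).Adj v u) (hw : (prism (m + 3)).Adj w u)
    (hcovers : FoldCovers p (r + pebble v + pebble w))
    (htwo : twoSidedWeight (m + 3) ⬝ᵥ (r + pebble v + pebble w) < 2 * 2 ^ (m + 3))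
    (hone : oneSidedWeight (m + 3) ⬝ᵥ (r + pebble v + pebble w) < 2 ^ (m + 3)) :
    FoldSimulates p (r + pebble u) := by
  simp only [dotProduct_add, dotProduct_single_one] at htwo hone
  have hv0 : v.1.val ≠ 0 := column_ne_zero_of_oneSidedWeight_lt (by omega)
  have hw0 : w.1.val ≠ 0 := column_ne_zero_of_oneSidedWeight_lt (by omega)
  have hvcol := columns_of_prism_adj hv
  have hwcol := columns_of_prism_adj hw
  by_cases hu0 : u.1.val = 0
  · have hr : twoSidedWeight (m + 3) ⬝ᵥ r < 2 ^ (m + 3) := by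
      have := two_mul_twoSidedWeight (v := v) (n := m + 3) (by omega)
      have := two_mul_twoSidedWeight (v := w) (n := m + 3) (by omega)
      omega
    by_cases hvlast : v.1.val + 1 = m + 3
    · exact .waiting hu0 hvlast (hcovers.mono le_self_add) hr
    · have hwlast : w.1.val + 1 = m + 3 := by
        by_contra hwlast
        have := two_mul_oneSidedWeight (v := v) (by omega)
        have := two_mul_oneSidedWeight (v := w) (by omega)
        omega
      exact .waiting hu0 hwlast (hcovers.mono (add_le_add_left le_self_add _)) hr
  · refine .before (hcovers.move hv0 hw0 hu0 (.inr hv) (.inr hw)) ?_ ?_ <;>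
      simp only [dotProduct_add, dotProduct_single_one]
    · have := twoSidedWeight_le_add hv hw
      omega
    · have := oneSidedWeight_le_two_mul (v := v) (u := u) (by omega)
      have := oneSidedWeight_le_two_mul (v := w) (u := u) (by omega)
      omega

lemma FoldCovers.move_of_weight_lt (hv : (prism (m + 3)).Adj v u) (hw : (prism (m + 3)).Adj w u)
    (hcovers : FoldCovers p (r + pebble v + pebble w + pebble t))
    (htwo : twoSidedWeight (m + 3) ⬝ᵥ (r + pebble v + pebble w) < 2 ^ (m + 3)) :
    FoldCovers p (r + pebble u + pebble t) := by
  simp only [dotProduct_add, dotProduct_single_one] at htwo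
  have hu := twoSidedWeight_le_add hv hw
  have := FoldCovers.move (u := u) (r := r + pebble t) (hcovers.mono (le_of_eq (by abel)))
    (column_ne_zero_of_twoSidedWeight_lt (by omega))
    (column_ne_zero_of_twoSidedWeight_lt (by omega))
    (column_ne_zero_of_twoSidedWeight_lt (by omega)) (.inr hv) (.inr hw)
  rwa [add_right_comm] at this

lemma FoldSimulates.step_waiting_token (ha : a.1.val = 0) (ht : t.1.val + 1 = m + 3)
    (hau : (prism (m + 3)).Adj a u) (hwu : (prism (m + 3)).Adj w u)
    (hcovers : FoldCovers p (r + pebble w + pebble t))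
    (htwo : twoSidedWeight (m + 3) ⬝ᵥ (r + pebble w) < 2 ^ (m + 3)) :
    FoldSimulates p (r + pebble u) := by
  simp only [dotProduct_add, dotProduct_single_one] at htwo
  have hw0 : w.1.val ≠ 0 := column_ne_zero_of_twoSidedWeight_lt (by omega)
  have haucol := columns_of_prism_adj hau
  have hwucol := columns_of_prism_adj hwu
  by_cases hu0 : u.1.val = 0
  · exact .waiting hu0 ht (hcovers.mono (add_le_add_left le_self_add _)) (by omega)
  have hu1 := two_mul_twoSidedWeight (v := u) (n := m + 3) (by omega)
  by_cases hwu1 : u.1.val = 1 ∧ w.1.val = 1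
  · have := two_mul_twoSidedWeight (Or.inl hwu1.2)
    exact .crossed hwu1.1 hwu1.2 (hcovers.mono le_self_add) (by omega)
  refine .of_covers ?_ ?_
  · by_cases hu1 : u.1.val = 1
    -- Here `w` lies in column `2`, so the ladder already has a pebble on the image of `u`.
    · exact (hcovers.mono le_self_add).congr_pebble
        (foldPrism_eq hw0 hu0 (by omega) (by omega))
    -- Here `u` lies in the last column, where `t` plays the part of `a`.
    · exact hcovers.move hw0 (by omega) hu0 (.inr hwu) (.inl (by omega))
  · simp only [dotProduct_add, dotProduct_single_one]
    have := two_pow_add_le_four_mul_twoSidedWeight (v := w) (n := m + 3) (by omega) (by omega)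
    omega

lemma FoldSimulates.step_crossed_token (ha : a.1.val = 1) (hb : b.1.val = 1)
    (hau : (prism (m + 3)).Adj a u) (hwu : (prism (m + 3)).Adj w u)
    (hcovers : FoldCovers p (r + pebble w + pebble b))
    (htwo : 2 * twoSidedWeight (m + 3) ⬝ᵥ (r + pebble w) < 2 ^ (m + 3)) :
    FoldSimulates p (r + pebble u) := by
  simp only [dotProduct_add, dotProduct_single_one] at htwo
  have hw0 : w.1.val ≠ 0 := column_ne_zero_of_twoSidedWeight_lt (by omega)
  have hw1 : ¬ (w.1.val = 1 ∨ w.1.val + 1 = m + 3) := fun h => by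
    have := two_mul_twoSidedWeight h
    omega
  have haucol := columns_of_prism_adj hau
  have hwucol := columns_of_prism_adj hwu
  -- By weight, `u` lies in column `1` or `2`; these are glued, so `b` plays the part of `a`.
  refine .of_covers (hcovers.move hw0 (by omega) (by omega) (.inr hwu) (.inl (by omega))) ?_
  simp only [dotProduct_add, dotProduct_single_one]
  have hpow : 2 ^ 3 ≤ 2 ^ (m + 3) := Nat.pow_le_pow_right two_pos (by omega)
  have := two_mul_twoSidedWeight (Or.inl ha)
  have := twoSidedWeight_le_add hau hwu
  omega

lemma indicator_pebble_of_column_ne_zero (hv : v.1.val ≠ 0) :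
    Set.indicator {v | v.1.val ≠ 0} (pebble v) = pebble v :=
  Set.indicator_eq_self.2 (Pi.support_single_subset.trans (Set.singleton_subset_iff.2 hv))

lemma column_ne_zero_of_four_mul_twoSidedWeight_add_lt (hv : (prism (m + 3)).Adj v u)
    (hw : (prism (m + 3)).Adj w u)
    (htwo : 4 * (twoSidedWeight (m + 3) v + twoSidedWeight (m + 3) w) < 5 * 2 ^ (m + 3)) :
    v.1.val ≠ 0 := fun hv0 => by
  have hvcol := columns_of_prism_adj hv
  have hwcol := columns_of_prism_adj hw
  have := twoSidedWeight_of_column_zero hv0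
  have := two_pow_add_le_four_mul_twoSidedWeight (v := w) (n := m + 3) (by omega) (by omega)
  omega

lemma FoldSimulates.step_light (hv : (prism (m + 3)).Adj v u) (hw : (prism (m + 3)).Adj w u)
    (hcovers : FoldCovers p (Set.indicator {v | v.1.val ≠ 0} (r + pebble v + pebble w)))
    (htwo : 4 * twoSidedWeight (m + 3) ⬝ᵥ (r + pebble v + pebble w) < 5 * 2 ^ (m + 3)) :
    FoldSimulates p (r + pebble u) := by
  simp only [dotProduct_add, dotProduct_single_one] at htwo
  have hv0 : v.1.val ≠ 0 :=
    column_ne_zero_of_four_mul_twoSidedWeight_add_lt hv hw (by omega)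
  have hw0 : w.1.val ≠ 0 :=
    column_ne_zero_of_four_mul_twoSidedWeight_add_lt hw hv (by omega)
  simp only [Set.indicator_add', indicator_pebble_of_column_ne_zero, hv0, hw0, ne_eq,
    not_false_eq_true] at hcovers
  refine .light ?_ ?_
  · by_cases hu0 : u.1.val = 0
    · refine hcovers.mono ?_
      have hpebble : Set.indicator {v | v.1.val ≠ 0} (pebble u) = 0 :=
        Set.indicator_eq_zero'.2 (Set.disjoint_singleton_left.2 (not_not.2 hu0) |>.mono_left
          Pi.support_single_subset)
      rw [Set.indicator_add', hpebble, add_zero, add_assoc]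
      exact le_self_add
    · rw [Set.indicator_add', indicator_pebble_of_column_ne_zero hu0]
      exact hcovers.move hv0 hw0 hu0 (.inr hv) (.inr hw)
  · simp only [dotProduct_add, dotProduct_single_one]
    have := twoSidedWeight_le_add hv hw
    omega

lemma FoldSimulates.step (h : FoldSimulates p q) (hstep : RubblingStep (prism (m + 3)) q r) :
    FoldSimulates p r := by
  obtain ⟨r, v, w, u, hv, hw, hq, rfl⟩ := hstep.exists_eq_add
  cases h with
  | before hcovers htwo hone =>
    subst hq
    exact .step_before hv hw hcovers htwo hone
  | waiting ha ht hcovers htwo =>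
    rcases add_pebble_eq_add_pebble_add_pebble hq with ⟨rfl, rfl⟩ | ⟨rfl, rfl⟩ | ⟨s, rfl, rfl⟩
    · exact .step_waiting_token ha ht hv hw hcovers htwo
    · exact .step_waiting_token ha ht hw hv hcovers htwo
    · rw [add_right_comm]
      exact .waiting ha ht (hcovers.move_of_weight_lt hv hw htwo)
        ((RubblingStep.dotProduct_le (fun _ _ => twoSidedWeight_le_two_mul)
          (rubblingStep_add_pebble s hv hw)).trans_lt htwo)
  | crossed ha hb hcovers htwo =>
    rcases add_pebble_eq_add_pebble_add_pebble hq with ⟨rfl, rfl⟩ | ⟨rfl, rfl⟩ | ⟨s, rfl, rfl⟩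
    · exact .step_crossed_token ha hb hv hw hcovers htwo
    · exact .step_crossed_token ha hb hw hv hcovers htwo
    · rw [add_right_comm]
      exact .crossed ha hb (hcovers.move_of_weight_lt hv hw (by omega))
        ((Nat.mul_le_mul_left 2 (RubblingStep.dotProduct_le (fun _ _ => twoSidedWeight_le_two_mul)
          (rubblingStep_add_pebble s hv hw))).trans_lt htwo)
  | light hcovers htwo =>
    subst hq
    exact .step_light hv hw hcovers htwo

lemma FoldSimulates.reach (h : FoldSimulates p q) (hreach : RubblingReach (prism (m + 3)) q r) :
    FoldSimulates p r := by
  induction hreach with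
  | refl => exact h
  | tail _ hstep ih => exact ih.step hstep

lemma FoldSimulates.kReachable (h : FoldSimulates p q) (hcolumn : 2 ≤ u.1.val) (hu : 1 ≤ q u) :
    KReachable (ladder (m + 1)) (pushforward foldPrism p) (foldPrism u) 1 := by
  cases h with
  | before hcovers htwo hone => exact hcovers.kReachable hu
  | @waiting r a t ha ht hcovers htwo =>
    have hua : u ≠ a := fun h => by
      rw [h] at hcolumn
      omega
    rw [Pi.add_apply, pebble_apply_of_ne hua] at hu
    exact (hcovers.mono le_self_add).kReachable hu
  | @crossed r a b ha hb hcovers htwo =>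
    have hua : u ≠ a := fun h => by
      rw [h] at hcolumn
      omega
    rw [Pi.add_apply, pebble_apply_of_ne hua] at hu
    exact (hcovers.mono le_self_add).kReachable hu
  | light hcovers htwo =>
    refine hcovers.kReachable ?_
    rwa [Set.indicator_of_mem (show u.1.val ≠ 0 by omega)]

lemma FoldSimulates.solvable (h : FoldSimulates p p) (hp : Solvable (prism (m + 3)) p) :
    Solvable (ladder (m + 1)) (pushforward foldPrism p) := fun y => by
  obtain ⟨q, hq, hu⟩ := hp (⟨y.1.val + 2, by omega⟩, y.2)
  exact (h.reach hq).kReachable (by simp) hu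

lemma FoldSimulates.refl_of_column_zero (hp : 1 ≤ p a) (ha : a.1.val = 0)
    (htwo : twoSidedWeight (m + 3) ⬝ᵥ p < 2 * 2 ^ (m + 3)) : FoldSimulates p p := by
  obtain ⟨r, rfl⟩ := exists_eq_add_pebble hp
  have hcovers : FoldCovers (r + pebble a) (r + pebble a) := .refl _ _
  rw [dotProduct_add, dotProduct_single_one, twoSidedWeight_of_column_zero ha] at htwo
  exact .waiting (t := (Fin.last (m + 2), a.2)) ha rfl
    (hcovers.congr_pebble (by simp [foldPrism, ha, Fin.last])) (by omega)

lemma exists_foldSimulates_comp_iso {p : Fin (m + 3) × Fin 2 → ℕ}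
    (hp : 3 * ∑ v, p v < 2 * (m + 3)) :
    ∃ φ : prism (m + 3) ≃g prism (m + 3), FoldSimulates (p ∘ φ) (p ∘ φ) := by
  obtain ⟨c, hc⟩ := exists_twoSidedWeight_comp_prismRotation_lt hp
  by_cases hzero : ∃ a, a.1.val = 0 ∧ 1 ≤ (p ∘ prismRotation c) a
  · obtain ⟨a, ha, hpa⟩ := hzero
    exact ⟨prismRotation c, .refl_of_column_zero hpa ha hc⟩
  by_cases hone : oneSidedWeight (m + 3) ⬝ᵥ (p ∘ prismRotation c) < 2 ^ (m + 3)
  · exact ⟨prismRotation c, .before (.refl _ _) hc hone⟩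
  have hsum := oneSidedWeight_add_comp_prismReflection (p := p ∘ prismRotation c) fun a ha => by
    by_contra hpa
    exact hzero ⟨a, ha, Nat.one_le_iff_ne_zero.2 hpa⟩
  refine ⟨(prismReflection (m + 3)).trans (prismRotation c),
    .before (q := (p ∘ prismRotation c) ∘ prismReflection (m + 3)) (.refl _ _) ?_ ?_⟩
  · rwa [dotProduct_comp_prismReflection, twoSidedWeight_comp_prismReflection]
  · omega

lemma optRub_ladder_le_of_three_mul_sum_lt {p : Fin (m + 3) × Fin 2 → ℕ}
    (hsolvable : Solvable (prism (m + 3)) p) (hp : 3 * ∑ v, p v < 2 * (m + 3)) :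
    optRub (ladder (m + 1)) ≤ ∑ v, p v := by
  obtain ⟨φ, hφ⟩ := exists_foldSimulates_comp_iso hp
  calc optRub (ladder (m + 1))
      ≤ ∑ y, pushforward foldPrism (p ∘ φ) y :=
        optRub_le_sum (hφ.solvable (hsolvable.comp_iso φ))
    _ = ∑ v, p (φ v) := sum_pushforward _ _
    _ = ∑ v, p v := Equiv.sum_comp φ.toEquiv p

end Simulation

theorem prism_lower_bound_general (n : ℕ) (hn : 3 ≤ n) :
    optRub (ladder (n - 2)) ≤ optRub (prism n) := by
  obtain ⟨m, rfl⟩ := Nat.exists_eq_add_of_le' hn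
  obtain ⟨p, hsolvable, hsum⟩ := exists_solvable_sum_eq_optRub (prism (m + 3))
  rw [← hsum]
  by_cases hp : 3 * ∑ v, p v < 2 * (m + 3)
  · exact optRub_ladder_le_of_three_mul_sum_lt hsolvable hp
  · have := three_mul_optRub_ladder_le m
    change optRub (ladder (m + 1)) ≤ _
    omega

/-- Lower bound: for `n ≥ 5` the optimal rubbling number of the `n`-prism is at least
that of the ladder `P_{n-2} □ P_2`. -/
theorem prism_lower_bound (n : ℕ) (hn : 5 ≤ n) :
    optRub (ladder (n - 2)) ≤ optRub (prism n) := by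
  exact prism_lower_bound_general n (by omega)
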